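/- Let d ≥ 2 and let g : ℕ → GL(d,ℝ) have bounded steps; for each n ∈ ℕ fix a singular value decomposition g(n) = k(n)·diag(α(n))·k'(n). Assume that for every index i ∈ Fin d with i ≠ 0, the sequence n ↦ log(α(n) 0) − log(α(n) i) is CLI. Then there exist δ ∈ (0,1] and N ∈ ℕ such that for all n ≥ N and all m ∈ ℕ: sin∠( w , e₁ ) ≤ 1 − δ, where w is the vector obtained by applying the matrix (diag(α(n)))⁻¹ · (k(n)⁻¹·k(n+m)) · diag(α(n)) to e₁. -/

import Mathlib

open Matrix

/-- The operator norm of a `d × d` real matrix acting on Euclidean `ℝ^d`. -/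
noncomputable def opNorm {d : ℕ} (M : Matrix (Fin d) (Fin d) ℝ) : ℝ :=
  ‖LinearMap.toContinuousLinearMap (Matrix.toEuclideanLin M)‖

/-- The action of a `d × d` real matrix on Euclidean `ℝ^d`. -/
noncomputable def appE {d : ℕ} (M : Matrix (Fin d) (Fin d) ℝ)
    (v : EuclideanSpace ℝ (Fin d)) : EuclideanSpace ℝ (Fin d) :=
  Matrix.toEuclideanLin M v

/-- `IsSVD g k α k'` means `g = k · diag(α) · k'` is a singular value decomposition:
`k, k'` are orthogonal and `α` is positive and nonincreasing. -/
def IsSVD {d : ℕ} (g k : Matrix (Fin d) (Fin d) ℝ) (α : Fin d → ℝ)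
    (k' : Matrix (Fin d) (Fin d) ℝ) : Prop :=
  k * kᵀ = 1 ∧ k' * k'ᵀ = 1 ∧ (∀ i, 0 < α i) ∧ Antitone α ∧
    g = k * Matrix.diagonal α * k'

/-- A sequence of matrices has bounded steps if consecutive quotients are uniformly
bounded (in operator norm) together with their inverses. -/
noncomputable def HasBoundedSteps {d : ℕ} (g : ℕ → Matrix (Fin d) (Fin d) ℝ) : Prop :=
  ∃ r₀ : ℝ, 1 ≤ r₀ ∧ ∀ n : ℕ,
    opNorm ((g n)⁻¹ * g (n + 1)) ≤ r₀ ∧ opNorm ((g (n + 1))⁻¹ * g n) ≤ r₀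

/-- A real sequence has coarsely linear increments (is CLI). -/
def IsCLI (x : ℕ → ℝ) : Prop :=
  ∃ κ κ' κ'' κ''' : ℝ, 0 < κ ∧ 0 < κ' ∧ 0 < κ'' ∧ 0 < κ''' ∧
    ∀ n m : ℕ, κ * m - κ' ≤ x (n + m) - x n ∧ x (n + m) - x n ≤ κ'' * m + κ'''

/-- The sine of the angle between two vectors of Euclidean `ℝ^d`. -/
noncomputable def sinAngle {d : ℕ} (u v : EuclideanSpace ℝ (Fin d)) : ℝ :=
  Real.sin (InnerProductGeometry.angle u v)

/-- The first standard basis vector of Euclidean `ℝ^d`. -/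
noncomputable def e1 {d : ℕ} (h : 0 < d) : EuclideanSpace ℝ (Fin d) :=
  EuclideanSpace.single ⟨0, h⟩ 1

/-
Write `H = k(n)⁻¹ k(n+m)`. The point is that the first column of `H` is dominated by the
singular value ratios, `|H i 0| ≤ D α(n)_i / α(n)_0` with `D` independent of `n` and `m`; so
conjugation by `diag(α(n))` keeps `w = diag(α(n))⁻¹ H diag(α(n)) e₁` bounded. As `H` is orthogonal
and `α(n)_i / α(n)_0 → 0`, the coordinate `w 0 = H 0 0` stays away from `0` for large `n`, whence
the angle estimate.

For the column bound, fix `N = n + m` and follow the first column `v` of `k(N)` in the frames `k(s)`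
as `s` decreases from `N`, where it is `e₁`, to `n`. By bounded steps,
`k(s)⁻¹ k(s+1) = diag(α(s)) M diag(α(s+1))⁻¹` with `‖M‖ ≤ r`, while the block of an orthogonal
matrix acting on the coordinates `≥ l` is a contraction. So in one step the norm of the coordinates
`≥ l` grows at most by what leaks in from the coordinates `q < l`. By induction on `l` these have
size `O(α(s+1)_q / α(s+1)_0)`, and the leak is `O(α(s)_l / α(s)_0)`. As this is geometrically small
compared with `α(n)_l / α(n)_0`, the leaks sum to a bound of the required form.
-/

section RealEstimates

theorem le_add_div_of_forall_le_succ_add_geometric {f : ℕ → ℝ} {C ρ : ℝ} {m : ℕ} (hC : 0 ≤ C)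
    (hρ₀ : 0 ≤ ρ) (hρ₁ : ρ < 1) (hf : ∀ j < m, f j ≤ f (j + 1) + C * ρ ^ j) :
    f 0 ≤ f m + C / (1 - ρ) := by
  have htelescope : f 0 - f m ≤ ∑ j ∈ Finset.range m, C * ρ ^ j := by
    rw [← Finset.sum_range_sub']
    refine Finset.sum_le_sum fun j hj => ?_
    linarith [hf j (Finset.mem_range.1 hj)]
  have hgeom : ∑ j ∈ Finset.range m, ρ ^ j ≤ (1 - ρ)⁻¹ := by
    rw [← tsum_geometric_of_lt_one hρ₀ hρ₁]
    exact (summable_geometric_of_lt_one hρ₀ hρ₁).sum_le_tsum _ fun j _ => pow_nonneg hρ₀ j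
  rw [← Finset.mul_sum] at htelescope
  rw [div_eq_mul_inv]
  linarith [mul_le_mul_of_nonneg_left hgeom hC]

theorem IsCLI.exists_exp_neg_le {x : ℕ → ℝ} (hx : IsCLI x) :
    ∃ A ρ : ℝ, 0 ≤ A ∧ 0 ≤ ρ ∧ ρ < 1 ∧
      ∀ n m, Real.exp (-x (n + m)) ≤ A * ρ ^ m * Real.exp (-x n) := by
  obtain ⟨κ, κ', _, _, hκ, -, -, -, h⟩ := hx
  refine ⟨Real.exp κ', Real.exp (-κ), (Real.exp_pos _).le, (Real.exp_pos _).le,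
    Real.exp_lt_one_iff.2 (neg_neg_of_pos hκ), fun n m => ?_⟩
  rw [← Real.exp_nat_mul, ← Real.exp_add, ← Real.exp_add, Real.exp_le_exp]
  linarith [(h n m).1]

theorem IsCLI.exists_div_le {a b : ℕ → ℝ} (ha : ∀ n, 0 < a n) (hb : ∀ n, 0 < b n)
    (hab : IsCLI fun n => Real.log (a n) - Real.log (b n)) :
    ∃ A ρ : ℝ, 0 ≤ A ∧ 0 ≤ ρ ∧ ρ < 1 ∧
      ∀ n m, b (n + m) / a (n + m) ≤ A * ρ ^ m * (b n / a n) := by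
  have hexp : ∀ n, Real.exp (-(Real.log (a n) - Real.log (b n))) = b n / a n := fun n => by
    rw [neg_sub, Real.exp_sub, Real.exp_log (ha n), Real.exp_log (hb n)]
  simpa only [hexp] using hab.exists_exp_neg_le

theorem IsCLI.tendsto_div {a b : ℕ → ℝ} (ha : ∀ n, 0 < a n) (hb : ∀ n, 0 < b n)
    (hab : IsCLI fun n => Real.log (a n) - Real.log (b n)) :
    Filter.Tendsto (fun n => b n / a n) Filter.atTop (nhds 0) := by
  obtain ⟨A, ρ, -, hρ₀, hρ₁, hdecay⟩ := hab.exists_div_le ha hb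
  refine squeeze_zero (fun n => (div_pos (hb n) (ha n)).le)
    (fun n => by simpa only [zero_add] using hdecay 0 n) ?_
  simpa using ((tendsto_pow_atTop_nhds_zero_of_lt_one hρ₀ hρ₁).const_mul A).mul_const (b 0 / a 0)

theorem sum_div_le_mul_sum_div {ι : Type*} {s : Finset ι} {t b D : ι → ℝ} {x y r : ℝ}
    (hx : 0 < x) (hy : 0 < y) (hxy : x ≤ r * y) (hb : ∀ q ∈ s, 0 < b q) (ht₀ : ∀ q ∈ s, 0 ≤ t q)
    (ht : ∀ q ∈ s, t q ≤ D q * (b q / y)) :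
    ∑ q ∈ s, t q / b q ≤ r * (∑ q ∈ s, D q) / x := by
  rw [Finset.mul_sum, Finset.sum_div]
  refine Finset.sum_le_sum fun q hq => ?_
  have hbq := hb q hq
  have hD : 0 ≤ D q := nonneg_of_mul_nonneg_left ((ht₀ q hq).trans (ht q hq)) (div_pos hbq hy)
  calc t q / b q ≤ D q * (b q / y) / b q := by gcongr; exact ht q hq
    _ = D q / y := by field_simp
    _ ≤ r * D q / x := by
      rw [div_le_div_iff₀ hy hx]
      nlinarith

theorem sin_angle_le_one_sub {V : Type*} [NormedAddCommGroup V] [InnerProductSpace ℝ V]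
    (x y : V) :
    Real.sin (InnerProductGeometry.angle x y) ≤ 1 - inner ℝ x y ^ 2 / (‖x‖ * ‖y‖) ^ 2 / 2 := by
  rw [← div_pow, ← InnerProductGeometry.cos_angle]
  nlinarith [Real.sin_sq_add_cos_sq (InnerProductGeometry.angle x y),
    sq_nonneg (1 - Real.sin (InnerProductGeometry.angle x y))]

end RealEstimates

open scoped Matrix.Norms.L2Operator

theorem norm_apply_le_l2_opNorm {m n 𝕜 : Type*} [Fintype m] [Fintype n] [DecidableEq n] [RCLike 𝕜]
    (A : Matrix m n 𝕜) (i : m) (j : n) : ‖A i j‖ ≤ ‖A‖ := by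
  have hcol := A.l2_opNorm_mulVec (EuclideanSpace.single j 1)
  rw [PiLp.norm_single, norm_one, mul_one] at hcol
  refine le_trans (le_of_eq ?_) ((PiLp.norm_apply_le _ i).trans hcol)
  simp

section OrthogonalGroup

variable {ι : Type*} [Fintype ι] [DecidableEq ι] {U : Matrix ι ι ℝ}

theorem transpose_mem_orthogonalGroup (hU : U ∈ Matrix.orthogonalGroup ι ℝ) :
    Uᵀ ∈ Matrix.orthogonalGroup ι ℝ :=
  Unitary.star_mem hU

theorem one_sub_sum_sq_le_sq_of_mem_orthogonalGroup (hU : U ∈ Matrix.orthogonalGroup ι ℝ)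
    {j : ι} {c : ι → ℝ} (hc : ∀ i, |U i j| ≤ c i) :
    1 - ∑ i ∈ Finset.univ.erase j, c i ^ 2 ≤ U j j ^ 2 := by
  have hcol : ∑ i, U i j ^ 2 = 1 := by
    have := congrFun (congrFun ((Matrix.mem_orthogonalGroup_iff' ι ℝ).1 hU) j) j
    simpa only [Matrix.star_eq_conjTranspose, Matrix.conjTranspose_eq_transpose_of_trivial,
      Matrix.mul_apply, Matrix.transpose_apply, Matrix.one_apply_eq, ← sq] using this
  rw [← Finset.add_sum_erase _ _ (Finset.mem_univ j)] at hcol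
  have : ∑ i ∈ Finset.univ.erase j, U i j ^ 2 ≤ ∑ i ∈ Finset.univ.erase j, c i ^ 2 :=
    Finset.sum_le_sum fun i _ => sq_le_sq' (neg_le_of_abs_le (hc i)) (le_of_abs_le (hc i))
  linarith

end OrthogonalGroup

section TailProjection

variable {ι : Type*} [Fintype ι] [LinearOrder ι]

/-- The orthogonal projection of Euclidean `ℝ^ι` onto the span of the basis vectors `e_i` with
`l ≤ i`. It isolates the components of a vector along the small singular values. -/
def tailProj (l : ι) : Matrix ι ι ℝ :=
  Matrix.diagonal fun i => if l ≤ i then 1 else 0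

theorem norm_tailProj_mul_diagonal_le {a : ι → ℝ} (ha₀ : ∀ i, 0 ≤ a i) (ha : Antitone a) (l : ι) :
    ‖tailProj l * Matrix.diagonal a‖ ≤ a l := by
  rw [tailProj, Matrix.diagonal_mul_diagonal, Matrix.l2_opNorm_diagonal,
    pi_norm_le_iff_of_nonneg (ha₀ l)]
  intro i
  split_ifs with hi
  · simpa only [one_mul, Real.norm_of_nonneg (ha₀ i)] using ha hi
  · simpa only [zero_mul, norm_zero] using ha₀ l

theorem norm_tailProj_le_one (l : ι) : ‖tailProj l‖ ≤ 1 := by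
  simpa using norm_tailProj_mul_diagonal_le (a := fun _ => 1) (by simp) antitone_const l

theorem diagonal_single_mul_tailProj (l : ι) :
    Matrix.diagonal (Pi.single l 1) * tailProj l = Matrix.diagonal (Pi.single l 1) := by
  rw [tailProj, Matrix.diagonal_mul_diagonal]
  congr 1
  ext i
  by_cases hi : i = l <;> simp [hi]

theorem tailProj_mul_diagonal_single {l z : ι} (hzl : z < l) :
    tailProj l * Matrix.diagonal (Pi.single z 1) = 0 := by
  rw [tailProj, Matrix.diagonal_mul_diagonal, Matrix.diagonal_eq_zero]
  ext i
  by_cases hi : i = z <;> simp [hi, hzl.not_ge]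

theorem norm_apply_le_norm_tailProj_mul (X : Matrix ι ι ℝ) (i j : ι) :
    ‖X i j‖ ≤ ‖tailProj i * X‖ := by
  simpa [tailProj] using norm_apply_le_l2_opNorm (tailProj i * X) i j

theorem diagonal_mul_one_sub_tailProj [LocallyFiniteOrderBot ι] (c : ι → ℝ) (l : ι) :
    Matrix.diagonal c * (1 - tailProj l) =
      ∑ q ∈ Finset.Iio l, c q • Matrix.diagonal (Pi.single q 1) := by
  ext i j
  by_cases hij : i = j
  · subst hij
    rcases lt_or_ge i l with hi | hi
    · simp [tailProj, Matrix.sum_apply, Pi.single_apply, hi, hi.not_ge]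
    · simp [tailProj, Matrix.sum_apply, Pi.single_apply, hi, hi.not_gt]
  · simp [tailProj, Matrix.sum_apply, hij]

theorem norm_diagonal_inv_mul_one_sub_tailProj_mul_le [LocallyFiniteOrderBot ι] {b : ι → ℝ}
    (hb : ∀ i, 0 < b i) (l : ι) (X : Matrix ι ι ℝ) :
    ‖Matrix.diagonal b⁻¹ * (1 - tailProj l) * X‖ ≤
      ∑ q ∈ Finset.Iio l, ‖tailProj q * X‖ / b q := by
  rw [diagonal_mul_one_sub_tailProj, Finset.sum_mul]
  refine norm_sum_le_of_le _ fun q _ => ?_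
  rw [Matrix.smul_mul, norm_smul, Pi.inv_apply, Real.norm_of_nonneg (inv_pos.2 (hb q)).le,
    inv_mul_eq_div]
  gcongr
  · exact (hb q).le
  calc ‖Matrix.diagonal (Pi.single q 1) * X‖
      = ‖Matrix.diagonal (Pi.single q 1) * (tailProj q * X)‖ := by
        rw [← Matrix.mul_assoc, diagonal_single_mul_tailProj]
    _ ≤ ‖Matrix.diagonal (Pi.single q (1 : ℝ))‖ * ‖tailProj q * X‖ := norm_mul_le _ _
    _ = ‖tailProj q * X‖ := by
        rw [Matrix.l2_opNorm_diagonal, Pi.norm_single, norm_one, one_mul]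

theorem norm_tailProj_mul_mul_le [LocallyFiniteOrderBot ι] {H M : Matrix ι ι ℝ} {a b : ι → ℝ}
    (hH : H ∈ Matrix.orthogonalGroup ι ℝ) (ha₀ : ∀ i, 0 ≤ a i) (ha : Antitone a)
    (hb : ∀ i, 0 < b i) (hab : H * Matrix.diagonal b = Matrix.diagonal a * M) (l : ι)
    (X : Matrix ι ι ℝ) :
    ‖tailProj l * (H * X)‖ ≤
      ‖tailProj l * X‖ + a l * ‖M‖ * ∑ q ∈ Finset.Iio l, ‖tailProj q * X‖ / b q := by
  have hH' : H = Matrix.diagonal a * M * Matrix.diagonal b⁻¹ := by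
    rw [← hab, Matrix.mul_assoc, Matrix.diagonal_mul_diagonal]
    simp [(hb _).ne']
  have hsplit : tailProj l * (H * X) = tailProj l * (H * (tailProj l * X)) +
      tailProj l * Matrix.diagonal a * M * (Matrix.diagonal b⁻¹ * (1 - tailProj l) * X) := by
    rw [show tailProj l * Matrix.diagonal a * M * (Matrix.diagonal b⁻¹ * (1 - tailProj l) * X) =
      tailProj l * (Matrix.diagonal a * M * Matrix.diagonal b⁻¹) * (1 - tailProj l) * X by
        simp only [Matrix.mul_assoc], ← hH']
    noncomm_ring
  rw [hsplit]
  refine norm_add_le_of_le ?_ ?_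
  · calc ‖tailProj l * (H * (tailProj l * X))‖
        ≤ ‖tailProj l‖ * ‖H * (tailProj l * X)‖ := norm_mul_le _ _
      _ ≤ 1 * ‖tailProj l * X‖ := by
        rw [CStarRing.norm_mem_unitary_mul _ hH]
        gcongr
        exact norm_tailProj_le_one l
      _ = ‖tailProj l * X‖ := one_mul _
  · refine (norm_mul_le _ _).trans ?_
    gcongr
    · have := ha₀ l; positivity
    · refine (norm_mul_le _ _).trans ?_
      gcongr
      exact norm_tailProj_mul_diagonal_le ha₀ ha l
    · exact norm_diagonal_inv_mul_one_sub_tailProj_mul_le hb l X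

end TailProjection

section SingularValues

variable {d : ℕ} {g h k₁ k₂ k₁' k₂' : Matrix (Fin d) (Fin d) ℝ} {a b : Fin d → ℝ} {z : Fin d}

theorem opNorm_eq_norm (M : Matrix (Fin d) (Fin d) ℝ) : opNorm M = ‖M‖ :=
  rfl

theorem IsSVD.left_mem_orthogonalGroup (hg : IsSVD g k₁ a k₁') :
    k₁ ∈ Matrix.orthogonalGroup (Fin d) ℝ :=
  (Matrix.mem_orthogonalGroup_iff (Fin d) ℝ).2 hg.1

theorem IsSVD.right_mem_orthogonalGroup (hg : IsSVD g k₁ a k₁') :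
    k₁' ∈ Matrix.orthogonalGroup (Fin d) ℝ :=
  (Matrix.mem_orthogonalGroup_iff (Fin d) ℝ).2 hg.2.1

theorem IsSVD.pos (hg : IsSVD g k₁ a k₁') (i : Fin d) : 0 < a i :=
  hg.2.2.1 i

theorem IsSVD.antitone (hg : IsSVD g k₁ a k₁') : Antitone a :=
  hg.2.2.2.1

theorem IsSVD.eq (hg : IsSVD g k₁ a k₁') : g = k₁ * Matrix.diagonal a * k₁' :=
  hg.2.2.2.2

theorem IsSVD.transpose_mul_mem_orthogonalGroup (hg : IsSVD g k₁ a k₁') (hh : IsSVD h k₂ b k₂') :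
    k₁ᵀ * k₂ ∈ Matrix.orthogonalGroup (Fin d) ℝ :=
  mul_mem (transpose_mem_orthogonalGroup hg.left_mem_orthogonalGroup) hh.left_mem_orthogonalGroup

theorem IsSVD.isUnit_det (hg : IsSVD g k₁ a k₁') : IsUnit g.det := by
  rw [hg.eq, Matrix.det_mul, Matrix.det_mul, Matrix.det_diagonal]
  exact ((Matrix.isUnit_det_of_right_inverse hg.1).mul
    (Finset.prod_pos fun i _ => hg.pos i).ne'.isUnit).mul
      (Matrix.isUnit_det_of_right_inverse hg.2.1)

theorem IsSVD.opNorm_eq (hg : IsSVD g k₁ a k₁') (hz : IsBot z) : opNorm g = a z := by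
  rw [opNorm_eq_norm, hg.eq, CStarRing.norm_mul_mem_unitary _ hg.right_mem_orthogonalGroup,
    CStarRing.norm_mem_unitary_mul _ hg.left_mem_orthogonalGroup, Matrix.l2_opNorm_diagonal]
  refine le_antisymm ((pi_norm_le_iff_of_nonneg (hg.pos z).le).2 fun i => ?_) ?_
  · rw [Real.norm_of_nonneg (hg.pos i).le]
    exact hg.antitone (hz i)
  · exact (le_abs_self _).trans (norm_le_pi_norm a z)

theorem IsSVD.top_le_opNorm_mul_top (hg : IsSVD g k₁ a k₁') (hh : IsSVD h k₂ b k₂')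
    (hz : IsBot z) : a z ≤ opNorm (h⁻¹ * g) * b z := by
  rw [← hg.opNorm_eq hz, ← hh.opNorm_eq hz, mul_comm]
  simp only [opNorm_eq_norm]
  calc ‖g‖ = ‖h * (h⁻¹ * g)‖ := by rw [Matrix.mul_nonsing_inv_cancel_left _ _ hh.isUnit_det]
    _ ≤ ‖h‖ * ‖h⁻¹ * g‖ := norm_mul_le _ _

theorem IsSVD.transpose_mul_mul_diagonal (hg : IsSVD g k₁ a k₁') (hh : IsSVD h k₂ b k₂') :
    k₁ᵀ * k₂ * Matrix.diagonal b = Matrix.diagonal a * (k₁' * (g⁻¹ * h) * k₂'ᵀ) := by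
  have hk₁ : k₁ᵀ * k₁ = 1 := mul_eq_one_comm.1 hg.1
  calc k₁ᵀ * k₂ * Matrix.diagonal b
      = k₁ᵀ * (k₂ * Matrix.diagonal b * k₂') * k₂'ᵀ := by
        simp only [Matrix.mul_assoc, hh.2.1, Matrix.mul_one]
    _ = k₁ᵀ * (g * (g⁻¹ * h)) * k₂'ᵀ := by
        rw [← hh.eq, Matrix.mul_nonsing_inv_cancel_left _ _ hg.isUnit_det]
    _ = k₁ᵀ * (k₁ * Matrix.diagonal a * k₁' * (g⁻¹ * h)) * k₂'ᵀ := by rw [← hg.eq]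
    _ = k₁ᵀ * k₁ * (Matrix.diagonal a * (k₁' * (g⁻¹ * h) * k₂'ᵀ)) := by
        simp only [Matrix.mul_assoc]
    _ = Matrix.diagonal a * (k₁' * (g⁻¹ * h) * k₂'ᵀ) := by rw [hk₁, Matrix.one_mul]

theorem IsSVD.norm_tailProj_transpose_mul_le (hg : IsSVD g k₁ a k₁') (hh : IsSVD h k₂ b k₂')
    (hz : IsBot z) {r : ℝ} (hgh : opNorm (g⁻¹ * h) ≤ r) (hhg : opNorm (h⁻¹ * g) ≤ r)
    {l : Fin d} {D : Fin d → ℝ} {Y : Matrix (Fin d) (Fin d) ℝ}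
    (hY : ∀ q < l, ‖tailProj q * (k₂ᵀ * Y)‖ ≤ D q * (b q / b z)) :
    ‖tailProj l * (k₁ᵀ * Y)‖ ≤ ‖tailProj l * (k₂ᵀ * Y)‖ +
      r ^ 2 * (∑ q ∈ Finset.Iio l, D q) * (a l / a z) := by
  have hM : ‖k₁' * (g⁻¹ * h) * k₂'ᵀ‖ ≤ r := by
    rwa [CStarRing.norm_mul_mem_unitary _
        (transpose_mem_orthogonalGroup hh.right_mem_orthogonalGroup),
      CStarRing.norm_mem_unitary_mul _ hg.right_mem_orthogonalGroup]
  have hr : 0 ≤ r := (norm_nonneg _).trans hM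
  have htop : a z ≤ r * b z :=
    (hg.top_le_opNorm_mul_top hh hz).trans (mul_le_mul_of_nonneg_right hhg (hh.pos z).le)
  have hsum : ∑ q ∈ Finset.Iio l, ‖tailProj q * (k₂ᵀ * Y)‖ / b q ≤
      r * (∑ q ∈ Finset.Iio l, D q) / a z :=
    sum_div_le_mul_sum_div (hg.pos z) (hh.pos z) htop (fun q _ => hh.pos q)
      (fun q _ => norm_nonneg _) fun q hq => hY q (Finset.mem_Iio.1 hq)
  have hk₂ : k₁ᵀ * Y = k₁ᵀ * k₂ * (k₂ᵀ * Y) := by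
    rw [Matrix.mul_assoc, ← Matrix.mul_assoc k₂, hh.1, Matrix.one_mul]
  have hal := (hg.pos l).le
  calc ‖tailProj l * (k₁ᵀ * Y)‖
      ≤ ‖tailProj l * (k₂ᵀ * Y)‖ + a l * ‖k₁' * (g⁻¹ * h) * k₂'ᵀ‖ *
          ∑ q ∈ Finset.Iio l, ‖tailProj q * (k₂ᵀ * Y)‖ / b q := by
        rw [hk₂]
        exact norm_tailProj_mul_mul_le (hg.transpose_mul_mem_orthogonalGroup hh)
          (fun i => (hg.pos i).le) hg.antitone hh.pos (hg.transpose_mul_mul_diagonal hh) l _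
    _ ≤ ‖tailProj l * (k₂ᵀ * Y)‖ + a l * r * (r * (∑ q ∈ Finset.Iio l, D q) / a z) := by
        gcongr
        exact Finset.sum_nonneg fun q _ => div_nonneg (norm_nonneg _) (hh.pos q).le
    _ = ‖tailProj l * (k₂ᵀ * Y)‖ + r ^ 2 * (∑ q ∈ Finset.Iio l, D q) * (a l / a z) := by ring

end SingularValues

section BoundedSteps

variable {d : ℕ} {g k k' : ℕ → Matrix (Fin d) (Fin d) ℝ} {α : ℕ → Fin d → ℝ} {l z : Fin d}

-- Right multiplication by `Matrix.diagonal (Pi.single z 1)` isolates the column `z` while staying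
-- among square matrices, so that its Euclidean norm is an L2 operator norm.
theorem norm_tailProj_mul_diagonal_single_le_one (hsvd : ∀ n, IsSVD (g n) (k n) (α n) (k' n))
    (n m : ℕ) :
    ‖tailProj l * ((k n)ᵀ * (k m * Matrix.diagonal (Pi.single z 1)))‖ ≤ 1 := by
  rw [← Matrix.mul_assoc (k n)ᵀ]
  calc ‖tailProj l * ((k n)ᵀ * k m * Matrix.diagonal (Pi.single z 1))‖
      ≤ ‖tailProj l‖ * ‖(k n)ᵀ * k m * Matrix.diagonal (Pi.single z 1)‖ := norm_mul_le _ _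
    _ = ‖tailProj l‖ := by
      rw [CStarRing.norm_mem_unitary_mul _ ((hsvd n).transpose_mul_mem_orthogonalGroup (hsvd m)),
        Matrix.l2_opNorm_diagonal, Pi.norm_single, norm_one, mul_one]
    _ ≤ 1 := norm_tailProj_le_one l

theorem norm_tailProj_transpose_mul_le_add_div (hsvd : ∀ n, IsSVD (g n) (k n) (α n) (k' n))
    (hz : IsBot z) {r A ρ : ℝ}
    (hr : ∀ n, opNorm ((g n)⁻¹ * g (n + 1)) ≤ r ∧ opNorm ((g (n + 1))⁻¹ * g n) ≤ r)
    (hA : 0 ≤ A) (hρ₀ : 0 ≤ ρ) (hρ₁ : ρ < 1)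
    (hdecay : ∀ n m, α (n + m) l / α (n + m) z ≤ A * ρ ^ m * (α n l / α n z))
    {D : Fin d → ℝ} (hD₀ : ∀ q < l, 0 ≤ D q) {Y : Matrix (Fin d) (Fin d) ℝ} {n m : ℕ}
    (hY : ∀ q < l, ∀ j ≤ m,
      ‖tailProj q * ((k (n + j))ᵀ * Y)‖ ≤ D q * (α (n + j) q / α (n + j) z)) :
    ‖tailProj l * ((k n)ᵀ * Y)‖ ≤ ‖tailProj l * ((k (n + m))ᵀ * Y)‖ +
      r ^ 2 * (∑ q ∈ Finset.Iio l, D q) * A * (α n l / α n z) / (1 - ρ) := by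
  have hS : 0 ≤ r ^ 2 * ∑ q ∈ Finset.Iio l, D q :=
    mul_nonneg (sq_nonneg r) (Finset.sum_nonneg fun q hq => hD₀ q (Finset.mem_Iio.1 hq))
  have hratio : 0 ≤ α n l / α n z := (div_pos ((hsvd n).pos l) ((hsvd n).pos z)).le
  refine le_add_div_of_forall_le_succ_add_geometric (f := fun j =>
    ‖tailProj l * ((k (n + j))ᵀ * Y)‖) (by positivity) hρ₀ hρ₁ fun j hj => ?_
  refine ((hsvd (n + j)).norm_tailProj_transpose_mul_le (hsvd (n + (j + 1))) hz
    (hr (n + j)).1 (hr (n + j)).2 fun q hq => hY q hq (j + 1) hj).trans ?_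
  linarith [mul_le_mul_of_nonneg_left (hdecay n j) hS]

theorem exists_norm_tailProj_le_of_forall_lt (hbd : HasBoundedSteps g)
    (hsvd : ∀ n, IsSVD (g n) (k n) (α n) (k' n)) (hz : IsBot z) (hzl : z < l)
    (hcli : IsCLI fun n => Real.log (α n z) - Real.log (α n l)) {D : Fin d → ℝ}
    (hD₀ : ∀ q < l, 0 ≤ D q)
    (hD : ∀ q < l, ∀ n m,
      ‖tailProj q * ((k n)ᵀ * (k (n + m) * Matrix.diagonal (Pi.single z 1)))‖ ≤
        D q * (α n q / α n z)) :
    ∃ D' : ℝ, 0 ≤ D' ∧ ∀ n m,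
      ‖tailProj l * ((k n)ᵀ * (k (n + m) * Matrix.diagonal (Pi.single z 1)))‖ ≤
        D' * (α n l / α n z) := by
  obtain ⟨r, -, hr⟩ := hbd
  obtain ⟨A, ρ, hA, hρ₀, hρ₁, hdecay⟩ :=
    hcli.exists_div_le (fun n => (hsvd n).pos z) (fun n => (hsvd n).pos l)
  refine ⟨r ^ 2 * (∑ q ∈ Finset.Iio l, D q) * A / (1 - ρ), ?_, fun n m => ?_⟩
  · have hsum : 0 ≤ ∑ q ∈ Finset.Iio l, D q :=
      Finset.sum_nonneg fun q hq => hD₀ q (Finset.mem_Iio.1 hq)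
    exact div_nonneg (mul_nonneg (mul_nonneg (sq_nonneg r) hsum) hA) (sub_nonneg.2 hρ₁.le)
  have hfinal :
      tailProj l * ((k (n + m))ᵀ * (k (n + m) * Matrix.diagonal (Pi.single z 1))) = 0 := by
    rw [← Matrix.mul_assoc (k (n + m))ᵀ, mul_eq_one_comm.1 (hsvd (n + m)).1, Matrix.one_mul,
      tailProj_mul_diagonal_single hzl]
  refine (norm_tailProj_transpose_mul_le_add_div hsvd hz hr hA hρ₀ hρ₁ hdecay hD₀
    (n := n) (m := m) fun q hq j hj => ?_).trans_eq ?_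
  · obtain ⟨p, rfl⟩ := Nat.exists_eq_add_of_le hj
    simpa only [add_assoc] using hD q hq (n + j) p
  · rw [hfinal, norm_zero]
    ring

theorem exists_norm_tailProj_le (hbd : HasBoundedSteps g)
    (hsvd : ∀ n, IsSVD (g n) (k n) (α n) (k' n)) (hz : IsBot z)
    (hcli : ∀ i ≠ z, IsCLI fun n => Real.log (α n z) - Real.log (α n i)) (l : Fin d) :
    ∃ D : ℝ, 0 ≤ D ∧ ∀ n m,
      ‖tailProj l * ((k n)ᵀ * (k (n + m) * Matrix.diagonal (Pi.single z 1)))‖ ≤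
        D * (α n l / α n z) := by
  induction l using WellFoundedLT.induction with
  | ind l ih =>
    rcases (hz l).eq_or_lt with rfl | hzl
    · refine ⟨1, zero_le_one, fun n m => ?_⟩
      rw [div_self ((hsvd n).pos z).ne', mul_one]
      exact norm_tailProj_mul_diagonal_single_le_one hsvd n (n + m)
    · choose! D hD₀ hD using ih
      exact exists_norm_tailProj_le_of_forall_lt hbd hsvd hz hzl (hcli l hzl.ne') hD₀ hD

theorem exists_abs_transpose_mul_apply_le (hbd : HasBoundedSteps g)
    (hsvd : ∀ n, IsSVD (g n) (k n) (α n) (k' n)) (hz : IsBot z)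
    (hcli : ∀ i ≠ z, IsCLI fun n => Real.log (α n z) - Real.log (α n i)) :
    ∃ D : ℝ, 1 ≤ D ∧ ∀ n m i, |((k n)ᵀ * k (n + m)) i z| ≤ D * (α n i / α n z) := by
  choose D hD₀ hD using exists_norm_tailProj_le hbd hsvd hz hcli
  refine ⟨1 + ∑ l, D l, by linarith [Finset.sum_nonneg fun l (_ : l ∈ Finset.univ) => hD₀ l],
    fun n m i => ?_⟩
  have hcol : ((k n)ᵀ * k (n + m)) i z =
      ((k n)ᵀ * (k (n + m) * Matrix.diagonal (Pi.single z (1 : ℝ)))) i z := by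
    rw [← Matrix.mul_assoc, Matrix.mul_diagonal, Pi.single_eq_same, mul_one]
  have hDi : D i ≤ 1 + ∑ l, D l := by
    linarith [Finset.single_le_sum (fun l _ => hD₀ l) (Finset.mem_univ i)]
  have hratio : 0 ≤ α n i / α n z := (div_pos ((hsvd n).pos i) ((hsvd n).pos z)).le
  calc |((k n)ᵀ * k (n + m)) i z|
      ≤ ‖tailProj i * ((k n)ᵀ * (k (n + m) * Matrix.diagonal (Pi.single z 1)))‖ :=
        by
        rw [hcol]
        exact norm_apply_le_norm_tailProj_mul _ i z
    _ ≤ D i * (α n i / α n z) := hD i n m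
    _ ≤ (1 + ∑ l, D l) * (α n i / α n z) := mul_le_mul_of_nonneg_right hDi hratio

theorem eventually_half_le_transpose_mul_apply_sq (hsvd : ∀ n, IsSVD (g n) (k n) (α n) (k' n))
    (hcli : ∀ i ≠ z, IsCLI fun n => Real.log (α n z) - Real.log (α n i)) {D : ℝ}
    (hD : ∀ n m i, |((k n)ᵀ * k (n + m)) i z| ≤ D * (α n i / α n z)) :
    ∀ᶠ n in Filter.atTop, ∀ m, 1 / 2 ≤ ((k n)ᵀ * k (n + m)) z z ^ 2 := by
  have htendsto : Filter.Tendsto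
      (fun n => ∑ i ∈ Finset.univ.erase z, (D * (α n i / α n z)) ^ 2) Filter.atTop (nhds 0) := by
    rw [← Finset.sum_const_zero (s := Finset.univ.erase z)]
    refine tendsto_finsetSum _ fun i hi => ?_
    have hratio := (hcli i (Finset.ne_of_mem_erase hi)).tendsto_div
      (fun n => (hsvd n).pos z) (fun n => (hsvd n).pos i)
    simpa using (hratio.const_mul D).pow 2
  filter_upwards [htendsto.eventually_le_const (half_pos one_pos)] with n hn m
  linarith [one_sub_sum_sq_le_sq_of_mem_orthogonalGroup
    ((hsvd n).transpose_mul_mem_orthogonalGroup (hsvd (n + m))) (hD n m)]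

end BoundedSteps

section Angle

variable {d : ℕ} {z : Fin d}

theorem appE_diagonal_inv_mul_mul_diagonal_single_apply {a : Fin d → ℝ} (ha : ∀ i, a i ≠ 0)
    (H : Matrix (Fin d) (Fin d) ℝ) (z i : Fin d) :
    appE ((Matrix.diagonal a)⁻¹ * H * Matrix.diagonal a) (EuclideanSpace.single z 1) i =
      H i z * (a z / a i) := by
  have hinv : (Matrix.diagonal a)⁻¹ = Matrix.diagonal a⁻¹ :=
    Matrix.inv_eq_right_inv (by simp [Matrix.diagonal_mul_diagonal, ha])
  rw [hinv, appE, Matrix.toLpLin_apply]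
  simp only [PiLp.ofLp_single, Matrix.mulVec_single_one, Matrix.col_apply,
    Matrix.mul_diagonal, Matrix.diagonal_mul, Pi.inv_apply]
  ring

theorem sinAngle_single_le_one_sub {w : EuclideanSpace ℝ (Fin d)} {D : ℝ}
    (hw : ∀ i, |w i| ≤ D) (hwz : 1 / 2 ≤ w z ^ 2) :
    sinAngle w (EuclideanSpace.single z 1) ≤ 1 - 1 / (4 * (d * D ^ 2)) := by
  have hnorm : ‖w‖ ^ 2 ≤ d * D ^ 2 := by
    rw [EuclideanSpace.real_norm_sq_eq]
    simpa using Finset.sum_le_card_nsmul Finset.univ _ _ fun i _ =>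
      sq_le_sq' (neg_le_of_abs_le (hw i)) (le_of_abs_le (hw i))
  have hpos : 0 < ‖w‖ ^ 2 := by
    refine pow_pos (norm_pos_iff.2 fun h => ?_) 2
    norm_num [h] at hwz
  have hsin := sin_angle_le_one_sub w (EuclideanSpace.single z 1)
  rw [EuclideanSpace.inner_single_right, PiLp.norm_single, norm_one, mul_one, one_mul,
    conj_trivial] at hsin
  refine hsin.trans (sub_le_sub_left ?_ 1)
  calc 1 / (4 * (d * D ^ 2)) ≤ 1 / (4 * ‖w‖ ^ 2) := by gcongr
    _ = 1 / 2 / ‖w‖ ^ 2 / 2 := by field_simp; norm_num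
    _ ≤ w z ^ 2 / ‖w‖ ^ 2 / 2 := by gcongr

theorem sinAngle_appE_diagonal_conj_le {H : Matrix (Fin d) (Fin d) ℝ} {a : Fin d → ℝ}
    (ha : ∀ i, 0 < a i) {D : ℝ} (hH : ∀ i, |H i z| ≤ D * (a i / a z)) (hHz : 1 / 2 ≤ H z z ^ 2) :
    sinAngle (appE ((Matrix.diagonal a)⁻¹ * H * Matrix.diagonal a) (EuclideanSpace.single z 1))
      (EuclideanSpace.single z 1) ≤ 1 - 1 / (4 * (d * D ^ 2)) := by
  have hw := appE_diagonal_inv_mul_mul_diagonal_single_apply (fun i => (ha i).ne') H z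
  refine sinAngle_single_le_one_sub (fun i => ?_) ?_
  · have hratio : 0 < a z / a i := div_pos (ha z) (ha i)
    rw [hw, abs_mul, abs_of_pos hratio, ← le_div_iff₀ hratio, div_div_eq_mul_div, mul_div_assoc]
    exact hH i
  · rwa [hw, div_self (ha z).ne', mul_one]

end Angle

/-- Expansion estimate: under the CLI hypothesis on the top singular value gaps, the vectors
`(diag(α(n))⁻¹ · k(n)⁻¹ k(n+m) · diag(α(n)))·e₁` make an angle with `e₁` of sine uniformly
bounded away from `1`. -/
theorem stmt13 (d : ℕ) (hd : 2 ≤ d) (g : ℕ → Matrix (Fin d) (Fin d) ℝ)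
    (hbd : HasBoundedSteps g)
    (k : ℕ → Matrix (Fin d) (Fin d) ℝ) (α : ℕ → Fin d → ℝ)
    (k' : ℕ → Matrix (Fin d) (Fin d) ℝ)
    (hsvd : ∀ n : ℕ, IsSVD (g n) (k n) (α n) (k' n))
    (hcli : ∀ i : Fin d, i ≠ ⟨0, by omega⟩ →
      IsCLI fun n => Real.log (α n ⟨0, by omega⟩) - Real.log (α n i)) :
    ∃ δ : ℝ, 0 < δ ∧ δ ≤ 1 ∧ ∃ N : ℕ, ∀ n : ℕ, N ≤ n → ∀ m : ℕ,
      sinAngle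
        (appE ((Matrix.diagonal (α n))⁻¹ * ((k n)⁻¹ * k (n + m)) * Matrix.diagonal (α n))
          (e1 (by omega)))
        (e1 (by omega)) ≤ 1 - δ := by
  set z : Fin d := ⟨0, by omega⟩
  have hz : IsBot z := fun i => Fin.mk_le_of_le_val i.val.zero_le
  obtain ⟨D, hD₁, hD⟩ := exists_abs_transpose_mul_apply_le hbd hsvd hz hcli
  obtain ⟨N, hN⟩ := Filter.eventually_atTop.1
    (eventually_half_le_transpose_mul_apply_sq hsvd hcli hD)
  have hdD : (1 : ℝ) ≤ d * D ^ 2 :=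
    one_le_mul_of_one_le_of_one_le (by exact_mod_cast (by omega : 1 ≤ d)) (one_le_pow₀ hD₁)
  refine ⟨1 / (4 * (d * D ^ 2)), by positivity, ?_, N, fun n hn m => ?_⟩
  · rw [div_le_one (by positivity)]
    linarith
  rw [Matrix.inv_eq_right_inv (hsvd n).1, e1]
  exact sinAngle_appE_diagonal_conj_le (hsvd n).pos (hD n m) (hN n hn m)
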